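/- (F. & M. Riesz theorem) If μ is a finite complex Borel measure on the unit circle 𝕋 such that ∫ e^{-ikθ} dμ(e^{iθ}) = 0 for every negative integer k, then μ is absolutely continuous with respect to Lebesgue arc length measure on 𝕋. -/

import Mathlib

open MeasureTheory Complex

/-- The integral of a function against a complex measure, defined via the Jordan
decompositions of the real and imaginary parts. -/
noncomputable def cmIntegral {α : Type*} [MeasurableSpace α]
    (μ : MeasureTheory.ComplexMeasure α) (f : α → ℂ) : ℂ :=
  ((∫ x, f x ∂μ.re.toJordanDecomposition.posPart)
      - ∫ x, f x ∂μ.re.toJordanDecomposition.negPart)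
    + Complex.I * ((∫ x, f x ∂μ.im.toJordanDecomposition.posPart)
      - ∫ x, f x ∂μ.im.toJordanDecomposition.negPart)

/-
Since `∫ zⁿ dμ = 0` for `n > 0`, every `f` in the disc algebra satisfies `∫ f dμ = f̂(0) μ(𝕋)`.
Let `K` be a compact null set. If functions `Fₙ` in the disc algebra are bounded by `1` and converge
pointwise to the indicator function of `𝕋 \ K`, then dominated convergence on both sides gives
`μ(𝕋 \ K) = μ(𝕋)`, that is, `μ(K) = 0`; inner regularity then passes to all Borel null sets.
To find such `Fₙ`, cover `K` by arcs of radius comparable to `δ` with centres `a` in `K`, so few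
that their number times `δ` is tiny, and take `Fₙ = exp(-Gₙ)`, where `Gₙ` is a multiple, growing
with `n`, of the sum of the functions `δ / (1 - z ā + δ)`: these have nonnegative real part, which
is bounded below on the arc around `a` independently of `δ`, while away from `K` each is `O(δ)`.
-/

open Filter Topology Metric Set
open scoped NNReal ENNReal

section ComplexMeasure

theorem signedMeasure_apply_eq_zero_of_forall_isCompact {X : Type*} [TopologicalSpace X]
    [T2Space X] [MeasurableSpace X] [OpensMeasurableSpace X] (s : SignedMeasure X)
    [s.totalVariation.InnerRegularCompactLTTop] {E : Set X} (hE : MeasurableSet E)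
    (h : ∀ K ⊆ E, IsCompact K → s K = 0) : s E = 0 := by
  rw [← enorm_eq_zero, ← nonpos_iff_eq_zero]
  refine le_of_forall_pos_le_add fun ε hε => ?_
  obtain ⟨K, hKE, hK, hlt⟩ :=
    hE.exists_isCompact_sdiff_lt (measure_ne_top s.totalVariation E) hε.ne'
  have hsdiff : s E = s (E \ K) := by
    rw [← VectorMeasure.of_add_of_sdiff hK.measurableSet hE hKE, h K hKE hK, zero_add]
  calc ‖s E‖ₑ = ‖s (E \ K)‖ₑ := by rw [hsdiff]
    _ ≤ s.totalVariation (E \ K) := s.enorm_le_totalVariation _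
    _ ≤ 0 + ε := by rw [zero_add]; exact hlt.le

theorem complexMeasure_apply_eq_zero_of_forall_isCompact {X : Type*} [TopologicalSpace X]
    [T2Space X] [MeasurableSpace X] [OpensMeasurableSpace X] (μ : ComplexMeasure X)
    [μ.re.totalVariation.InnerRegularCompactLTTop] [μ.im.totalVariation.InnerRegularCompactLTTop]
    {E : Set X} (hE : MeasurableSet E) (h : ∀ K ⊆ E, IsCompact K → μ K = 0) : μ E = 0 :=
  Complex.ext
    (signedMeasure_apply_eq_zero_of_forall_isCompact μ.re hE fun K hKE hK =>
      congrArg Complex.re (h K hKE hK))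
    (signedMeasure_apply_eq_zero_of_forall_isCompact μ.im hE fun K hKE hK =>
      congrArg Complex.im (h K hKE hK))

theorem cmIntegral_indicator_one {X : Type*} [MeasurableSpace X] (μ : ComplexMeasure X)
    {A : Set X} (hA : MeasurableSet A) : cmIntegral μ (A.indicator 1) = μ A := by
  have integral_eq (p : Measure X) : ∫ x, A.indicator (1 : X → ℂ) x ∂p = p.real A := by
    rw [integral_indicator hA]
    simp
  calc cmIntegral μ (A.indicator 1) = μ.re A + I * μ.im A := by
        simp only [cmIntegral, integral_eq, ← ofReal_sub,
          SignedMeasure.apply_eq_posPart_real_sub_negPart_real _ hA]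
    _ = μ A := by rw [mul_comm]; exact re_add_im (μ A)

theorem tendsto_cmIntegral_of_norm_le {X : Type*} [MeasurableSpace X] (μ : ComplexMeasure X)
    {F : ℕ → X → ℂ} {f : X → ℂ} {C : ℝ} (hF : ∀ n, StronglyMeasurable (F n))
    (hC : ∀ n x, ‖F n x‖ ≤ C) (hlim : ∀ x, Tendsto (F · x) atTop (𝓝 (f x))) :
    Tendsto (fun n => cmIntegral μ (F n)) atTop (𝓝 (cmIntegral μ f)) := by
  have tendsto_integral (p : Measure X) [IsFiniteMeasure p] :
      Tendsto (fun n => ∫ x, F n x ∂p) atTop (𝓝 (∫ x, f x ∂p)) :=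
    tendsto_integral_of_dominated_convergence (fun _ => C)
      (fun n => (hF n).aestronglyMeasurable) (integrable_const C)
      (fun n => .of_forall (hC n)) (.of_forall hlim)
  exact ((tendsto_integral _).sub (tendsto_integral _)).add
    (((tendsto_integral _).sub (tendsto_integral _)).const_mul I)

variable {X : Type*} [TopologicalSpace X] [CompactSpace X] [MeasurableSpace X] [BorelSpace X]

/-- Integration against a finite measure, as a continuous linear functional on `C(X, ℂ)`. -/
noncomputable def integralCLM (p : Measure X) [IsFiniteMeasure p] : C(X, ℂ) →L[ℂ] ℂ :=
  (L1.integralCLM' ℂ).comp (ContinuousMap.toLp 1 p ℂ)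

theorem integralCLM_apply (p : Measure X) [IsFiniteMeasure p] (f : C(X, ℂ)) :
    integralCLM p f = ∫ x, f x ∂p :=
  calc integralCLM p f = L1.integral (ContinuousMap.toLp 1 p ℂ f) := (L1.integral_eq' ℂ _).symm
    _ = ∫ x, ContinuousMap.toLp 1 p ℂ f x ∂p := L1.integral_eq_integral _
    _ = ∫ x, f x ∂p := integral_congr_ae (ContinuousMap.coeFn_toLp p f)

/-- Integration against a complex measure, as a continuous linear functional on `C(X, ℂ)`. -/
noncomputable def cmIntegralCLM (μ : ComplexMeasure X) : C(X, ℂ) →L[ℂ] ℂ :=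
  (integralCLM μ.re.toJordanDecomposition.posPart
      - integralCLM μ.re.toJordanDecomposition.negPart)
    + I • (integralCLM μ.im.toJordanDecomposition.posPart
      - integralCLM μ.im.toJordanDecomposition.negPart)

theorem cmIntegralCLM_apply (μ : ComplexMeasure X) (f : C(X, ℂ)) :
    cmIntegralCLM μ f = cmIntegral μ f := by
  simp [cmIntegralCLM, cmIntegral, integralCLM_apply]

end ComplexMeasure

section Cover

theorem exists_finset_pairwiseDisjoint_closedBall_cover {X : Type*} [PseudoMetricSpace X]
    {K : Set X} (hK : IsCompact K) {δ : ℝ} (hδ : 0 < δ) :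
    ∃ u : Finset X, ↑u ⊆ K ∧ (u : Set X).PairwiseDisjoint (closedBall · δ) ∧
      K ⊆ ⋃ b ∈ u, closedBall b (2 * δ) := by
  lift δ to ℝ≥0 using hδ.le
  have hδ0 : δ ≠ 0 := by rintro rfl; exact hδ.false
  obtain ⟨N, -, hN, hcover⟩ := exists_finite_isCover_of_isCompact hδ0 hK
  have hpack : packingNumber (2 * δ) K < ⊤ :=
    (packingNumber_two_mul_le_externalCoveringNumber δ K).trans_lt
      (hcover.externalCoveringNumber_le_encard.trans_lt hN.encard_lt_top)
  have hfin : (maximalSeparatedSet (2 * δ) K).Finite := by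
    rw [← encard_lt_top_iff, encard_maximalSeparatedSet hpack.ne]
    exact hpack
  refine ⟨hfin.toFinset, ?_, ?_, ?_⟩
  · rw [hfin.coe_toFinset]
    exact maximalSeparatedSet_subset
  · rw [hfin.coe_toFinset]
    intro a ha b hb hab
    have hsep : ((2 * δ : ℝ≥0) : ℝ≥0∞) < edist a b := isSeparated_maximalSeparatedSet ha hb hab
    refine closedBall_disjoint_closedBall ?_
    rw [edist_nndist, ENNReal.coe_lt_coe, ← NNReal.coe_lt_coe, coe_nndist] at hsep
    push_cast at hsep
    linarith
  · simpa using isCover_iff_subset_iUnion_closedBall.1 (isCover_maximalSeparatedSet hpack.ne)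

theorem eventually_exists_finset_cover_sum_measure_closedBall_lt {X : Type*} [MetricSpace X]
    [ProperSpace X] [MeasurableSpace X] [OpensMeasurableSpace X] {μ : Measure X}
    [IsFiniteMeasureOnCompacts μ] {K : Set X} (hK : IsCompact K) {ε : ℝ≥0∞} (hε : μ K < ε) :
    ∀ᶠ δ in 𝓝[>] 0, ∃ u : Finset X, ↑u ⊆ K ∧ K ⊆ ⋃ b ∈ u, closedBall b (2 * δ) ∧
      ∑ b ∈ u, μ (closedBall b δ) < ε := by
  have hthick : ∀ᶠ δ in 𝓝[>] 0, μ (cthickening δ K) < ε :=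
    ((tendsto_measure_cthickening_of_isCompact hK).eventually_lt_const hε).filter_mono
      nhdsWithin_le_nhds
  filter_upwards [hthick, self_mem_nhdsWithin] with δ hlt hδ
  obtain ⟨u, huK, hdisj, hcover⟩ := exists_finset_pairwiseDisjoint_closedBall_cover hK hδ
  refine ⟨u, huK, hcover, lt_of_le_of_lt ?_ hlt⟩
  calc ∑ b ∈ u, μ (closedBall b δ) = μ (⋃ b ∈ u, closedBall b δ) :=
        (measure_biUnion_finset hdisj fun _ _ => measurableSet_closedBall).symm
    _ ≤ μ (cthickening δ K) := measure_mono <| iUnion₂_subset fun b hb =>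
        closedBall_subset_cthickening (huK hb) δ

end Cover

section HalfPlane

variable {z : ℂ} {δ : ℝ}

theorem re_div_add_ofReal (z : ℂ) (δ : ℝ) :
    (δ / (z + δ)).re = δ * (z.re + δ) / ‖z + δ‖ ^ 2 := by
  simp [div_eq_mul_inv, inv_re, normSq_eq_norm_sq, mul_assoc]

theorem re_div_add_ofReal_nonneg (hz : 0 ≤ z.re) (hδ : 0 ≤ δ) : 0 ≤ (δ / (z + δ)).re := by
  rw [re_div_add_ofReal]
  positivity

theorem norm_div_add_ofReal_le (hz : 0 ≤ z.re) (hz0 : z ≠ 0) (hδ : 0 ≤ δ) :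
    ‖δ / (z + δ)‖ ≤ δ / ‖z‖ := by
  have hle : ‖z‖ ≤ ‖z + δ‖ := by
    refine le_of_sq_le_sq ?_ (norm_nonneg _)
    simp only [← normSq_eq_norm_sq, normSq_apply, add_re, add_im, ofReal_re, ofReal_im]
    nlinarith [mul_nonneg hz hδ]
  rw [norm_div, Complex.norm_of_nonneg hδ]
  gcongr

theorem inv_sq_le_re_div_add_ofReal (hz : 0 ≤ z.re) (hδ : 0 < δ) {C : ℝ} (hC : ‖z‖ ≤ C * δ) :
    ((C + 1) ^ 2)⁻¹ ≤ (δ / (z + δ)).re := by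
  have hupper : ‖z + δ‖ ≤ (C + 1) * δ := by
    linarith [norm_add_le z δ, Complex.norm_of_nonneg hδ.le]
  have hpos : 0 < ‖z + δ‖ := by
    refine lt_of_lt_of_le ?_ (re_le_norm _)
    rw [add_re, ofReal_re]
    positivity
  have hC1 : 0 < C + 1 := pos_of_mul_pos_left (hpos.trans_le hupper) hδ.le
  calc ((C + 1) ^ 2)⁻¹ = δ * δ / ((C + 1) * δ) ^ 2 := by field_simp
    _ ≤ δ * (z.re + δ) / ‖z + δ‖ ^ 2 := by gcongr; linarith
    _ = (δ / (z + δ)).re := (re_div_add_ofReal z δ).symm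

end HalfPlane

section Circle

variable {T : ℝ}

theorem norm_fourier_one_sub_one_le [Fact (0 < T)] (x : AddCircle T) :
    ‖(fourier 1 x : ℂ) - 1‖ ≤ 2 * Real.pi / T * ‖x‖ := by
  have hT : 0 < T := Fact.out
  obtain ⟨t, ht, rfl⟩ : x ∈ ((↑) : ℝ → AddCircle T) '' Icc (-(T / 2)) (-(T / 2) + T) := by
    rw [AddCircle.coe_image_Icc_eq]
    exact mem_univ x
  have hnorm : ‖(t : AddCircle T)‖ = |t| := by
    rw [AddCircle.norm_coe_eq_abs_iff T hT.ne', abs_of_pos hT, abs_le]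
    constructor <;> linarith [ht.1, ht.2]
  have hexp : (fourier 1 (t : AddCircle T) : ℂ) = exp (I * ((2 * Real.pi / T * t : ℝ) : ℂ)) := by
    rw [fourier_coe_apply]
    congr 1
    push_cast
    ring
  calc ‖(fourier 1 (t : AddCircle T) : ℂ) - 1‖ ≤ ‖2 * Real.pi / T * t‖ := by
        rw [hexp]
        exact Real.norm_exp_I_mul_ofReal_sub_one_le
    _ = 2 * Real.pi / T * ‖(t : AddCircle T)‖ := by
        rw [norm_mul, Real.norm_of_nonneg (by positivity), hnorm, Real.norm_eq_abs]

theorem fourier_one_eq_one_iff (hT : T ≠ 0) {x : AddCircle T} :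
    (fourier 1 x : ℂ) = 1 ↔ x = 0 := by
  rw [fourier_one, Circle.coe_eq_one, ← AddCircle.toCircle_zero,
    (AddCircle.injective_toCircle hT).eq_iff]

theorem re_one_sub_fourier_nonneg (n : ℤ) (x : AddCircle T) : 0 ≤ (1 - (fourier n x : ℂ)).re := by
  have hle : (fourier n x : ℂ).re ≤ ‖(fourier n x : ℂ)‖ := re_le_norm _
  rw [fourier_apply, Circle.norm_coe] at hle
  rwa [sub_re, one_re, sub_nonneg]

variable [Fact (0 < T)]

theorem inv_sq_le_re_div_one_sub_fourier_add {δ C : ℝ} (hδ : 0 < δ) {x : AddCircle T}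
    (hx : ‖x‖ ≤ C * δ) :
    ((2 * Real.pi / T * C + 1) ^ 2)⁻¹ ≤ (δ / (1 - (fourier 1 x : ℂ) + δ)).re := by
  have hT : 0 < T := Fact.out
  refine inv_sq_le_re_div_add_ofReal (re_one_sub_fourier_nonneg 1 x) hδ ?_
  calc ‖1 - (fourier 1 x : ℂ)‖ = ‖(fourier 1 x : ℂ) - 1‖ := norm_sub_rev _ _
    _ ≤ 2 * Real.pi / T * ‖x‖ := norm_fourier_one_sub_one_le x
    _ ≤ 2 * Real.pi / T * (C * δ) := by gcongr
    _ = 2 * Real.pi / T * C * δ := by ring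

theorem exists_finset_cover_card_mul_le {K : Set (AddCircle T)} (hK : IsCompact K)
    (h0 : volume K = 0) {ε : ℝ} (hε : 0 < ε) :
    ∃ δ > 0, ∃ u : Finset (AddCircle T), ↑u ⊆ K ∧ K ⊆ ⋃ b ∈ u, closedBall b (2 * δ) ∧
      u.card * δ ≤ ε := by
  have hT : 0 < T := Fact.out
  have hsmall : ∀ᶠ δ in 𝓝[>] (0 : ℝ), δ ∈ Ioo 0 (T / 2) := Ioo_mem_nhdsGT (half_pos hT)
  have hcover := eventually_exists_finset_cover_sum_measure_closedBall_lt (μ := volume) hK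
    (ε := ENNReal.ofReal ε) (by simpa [h0] using hε)
  obtain ⟨δ, ⟨u, huK, hu, hsum⟩, hδ, hδT⟩ := (hcover.and hsmall).exists
  refine ⟨δ, hδ, u, huK, hu, ?_⟩
  have hcard : ∑ b ∈ u, volume (closedBall b δ) = ENNReal.ofReal (u.card * (2 * δ)) := by
    simp only [AddCircle.volume_closedBall, min_eq_right (by linarith : 2 * δ ≤ T),
      Finset.sum_const, nsmul_eq_mul]
    rw [← ENNReal.ofReal_natCast, ← ENNReal.ofReal_mul (by positivity)]
  rw [hcard, ENNReal.ofReal_lt_ofReal_iff hε] at hsum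
  nlinarith [mul_nonneg (Nat.cast_nonneg (α := ℝ) u.card) hδ.le]

end Circle

section DiscAlgebra

/-- The disc algebra on the circle `AddCircle T`: the boundary values of the functions that are
continuous on the closed unit disc and holomorphic inside it, encoded as the uniform closure of
the polynomials in `fourier 1`. -/
noncomputable def discAlgebra (T : ℝ) : Subalgebra ℂ C(AddCircle T, ℂ) :=
  Algebra.elemental ℂ (fourier 1)

theorem isClosed_discAlgebra (T : ℝ) : IsClosed (discAlgebra T : Set C(AddCircle T, ℂ)) :=
  Algebra.elemental.isClosed ℂ _

theorem fourier_one_pow {T : ℝ} (n : ℕ) : (fourier 1 : C(AddCircle T, ℂ)) ^ n = fourier n := by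
  induction n with
  | zero => ext; simp
  | succ n ih =>
    ext x
    rw [pow_succ, ih, ContinuousMap.mul_apply, Nat.cast_succ, fourier_add]

variable {T : ℝ} [Fact (0 < T)]

theorem exp_mem_discAlgebra {g : C(AddCircle T, ℂ)} (hg : g ∈ discAlgebra T) :
    NormedSpace.exp g ∈ discAlgebra T := by
  let +nondep : NormedAlgebra ℚ C(AddCircle T, ℂ) := .restrictScalars ℚ ℂ _
  exact NormedSpace.exp_mem (R := ℂ) (isClosed_discAlgebra T) hg

theorem exp_continuousMap_apply {X : Type*} [TopologicalSpace X] [CompactSpace X] (g : C(X, ℂ))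
    (x : X) : NormedSpace.exp g x = exp (g x) := by
  let +nondep : NormedAlgebra ℚ C(X, ℂ) := .restrictScalars ℚ ℂ _
  rw [exp_eq_exp_ℂ]
  exact NormedSpace.map_exp (ContinuousMap.evalAlgHom ℂ ℂ x) (continuous_eval_const x) g

theorem exists_mem_discAlgebra_eq_div {δ : ℝ} (hδ : 0 < δ) (a : AddCircle T) :
    ∃ g ∈ discAlgebra T, ∀ x, g x = δ / (1 - fourier 1 (x - a) + δ) := by
  have hδ' : (1 + δ : ℂ) ≠ 0 := by
    exact_mod_cast (by positivity : (1 + δ : ℝ) ≠ 0)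
  let c : ℂ := fourier 1 (-a) / (1 + δ)
  let w : C(AddCircle T, ℂ) := c • fourier 1
  have hw : w ∈ discAlgebra T :=
    (discAlgebra T).smul_mem (Algebra.elemental.self_mem ℂ (fourier 1)) c
  have hw1 : ‖w‖ < 1 := by
    have hc : ‖c‖ = (1 + δ)⁻¹ := by
      rw [norm_div, fourier_apply, Circle.norm_coe, one_div, ← ofReal_one, ← ofReal_add,
        Complex.norm_of_nonneg (by positivity)]
    rw [norm_smul, fourier_norm, mul_one, hc]
    exact inv_lt_one_of_one_lt₀ (by linarith)
  have hwx (x : AddCircle T) : w x = fourier 1 (x - a) / (1 + δ) := by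
    simp only [w, c, ContinuousMap.smul_apply, smul_eq_mul, fourier_one, sub_eq_add_neg,
      AddCircle.toCircle_add, Circle.coe_mul]
    ring
  refine ⟨((δ : ℂ) / (1 + δ)) • ∑' i : ℕ, w ^ i,
    (discAlgebra T).smul_mem (tsum_mem (isClosed_discAlgebra T) fun i => pow_mem hw i) _,
    fun x => ?_⟩
  have hgeom : (1 - w x) * (∑' i : ℕ, w ^ i) x = 1 :=
    DFunLike.congr_fun (mul_neg_geom_series w hw1) x
  have hfactor : 1 - fourier 1 (x - a) + δ = (1 + δ) * (1 - w x) := by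
    rw [hwx]
    field_simp
    ring
  rw [hfactor, ContinuousMap.smul_apply, smul_eq_mul, eq_inv_of_mul_eq_one_right hgeom,
    div_mul_eq_div_div, ← div_eq_mul_inv]

theorem exists_mem_discAlgebra_re_ge_of_isCompact {K : Set (AddCircle T)} (hK : IsCompact K)
    (h0 : volume K = 0) {M ε : ℝ} (hM : 0 < M) (hε : 0 < ε) :
    ∃ G ∈ discAlgebra T, (∀ x, 0 ≤ (G x).re) ∧ (∀ x ∈ K, M ≤ (G x).re) ∧
      ∀ x, ∀ d > 0, (∀ b ∈ K, d ≤ ‖1 - (fourier 1 (x - b) : ℂ)‖) → ‖G x‖ ≤ ε / d := by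
  have hT : 0 < T := Fact.out
  let C : ℝ := 2 * Real.pi / T * 2
  let m : ℝ := M * (C + 1) ^ 2
  have hm : 0 < m := by positivity
  obtain ⟨δ, hδ, u, huK, hcover, hcard⟩ := exists_finset_cover_card_mul_le hK h0 (div_pos hε hm)
  choose g hg hgx using exists_mem_discAlgebra_eq_div (T := T) hδ
  have hsum (x : AddCircle T) : ((m : ℂ) • ∑ b ∈ u, g b) x = m * ∑ b ∈ u, g b x := by
    simp
  have hre (x : AddCircle T) : (((m : ℂ) • ∑ b ∈ u, g b) x).re = m * ∑ b ∈ u, (g b x).re := by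
    rw [hsum, re_ofReal_mul, re_sum]
  have hg_nonneg (b x : AddCircle T) : 0 ≤ (g b x).re := by
    rw [hgx]
    exact re_div_add_ofReal_nonneg (re_one_sub_fourier_nonneg 1 _) hδ.le
  refine ⟨(m : ℂ) • ∑ b ∈ u, g b, (discAlgebra T).smul_mem (sum_mem fun b _ => hg b) _,
    fun x => ?_, fun x hx => ?_, fun x d hd hdist => ?_⟩
  · rw [hre]
    exact mul_nonneg hm.le (Finset.sum_nonneg fun b _ => hg_nonneg b x)
  · obtain ⟨b, hb, hxb⟩ := mem_iUnion₂.1 (hcover hx)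
    calc M = m * ((C + 1) ^ 2)⁻¹ := by rw [mul_inv_cancel_right₀ (by positivity)]
      _ ≤ m * (g b x).re := by
        rw [hgx]
        gcongr
        exact inv_sq_le_re_div_one_sub_fourier_add hδ (by rwa [← dist_eq_norm])
      _ ≤ m * ∑ b ∈ u, (g b x).re := by
        gcongr
        exact Finset.single_le_sum (f := fun b => (g b x).re) (fun b _ => hg_nonneg b x) hb
      _ = _ := (hre x).symm
  · have hfar (b : AddCircle T) (hb : b ∈ u) : ‖g b x‖ ≤ δ / d := by
      have hdb := hdist b (huK hb)
      rw [hgx]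
      refine (norm_div_add_ofReal_le (re_one_sub_fourier_nonneg 1 _)
        (norm_pos_iff.1 (hd.trans_le hdb)) hδ.le).trans ?_
      gcongr
    calc _ = m * ‖∑ b ∈ u, g b x‖ := by rw [hsum, norm_mul, Complex.norm_of_nonneg hm.le]
      _ ≤ m * (u.card * (δ / d)) := by
        gcongr
        simpa using norm_sum_le_of_le u hfar
      _ = m * (u.card * δ) / d := by ring
      _ ≤ m * (ε / m) / d := by gcongr
      _ = ε / d := by rw [mul_div_cancel₀ _ hm.ne']

theorem exists_seq_discAlgebra_tendsto_indicator_compl {K : Set (AddCircle T)} (hK : IsCompact K)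
    (h0 : volume K = 0) :
    ∃ F : ℕ → C(AddCircle T, ℂ), (∀ n, F n ∈ discAlgebra T) ∧ (∀ n x, ‖F n x‖ ≤ 1) ∧
      ∀ x, Tendsto (F · x) atTop (𝓝 (Kᶜ.indicator 1 x)) := by
  choose G hG hG_nonneg hG_ge hG_le using fun n : ℕ =>
    exists_mem_discAlgebra_re_ge_of_isCompact hK h0 (Nat.cast_add_one_pos (α := ℝ) n)
      (Nat.one_div_pos_of_nat (α := ℝ) (n := n))
  refine ⟨fun n => NormedSpace.exp (-G n), fun n => exp_mem_discAlgebra (neg_mem (hG n)),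
    fun n x => ?_, fun x => ?_⟩
  · rw [exp_continuousMap_apply, norm_exp, Real.exp_le_one_iff]
    simpa using hG_nonneg n x
  simp only [exp_continuousMap_apply, ContinuousMap.neg_apply]
  by_cases hx : x ∈ K
  · rw [indicator_of_notMem (by simpa using hx), tendsto_zero_iff_norm_tendsto_zero]
    simp only [norm_exp, neg_re]
    refine Real.tendsto_exp_neg_atTop_nhds_zero.comp ?_
    exact tendsto_atTop_mono (fun n => hG_ge n x hx)
      (tendsto_atTop_add_const_right _ 1 tendsto_natCast_atTop_atTop)
  · obtain ⟨d, hd, hdist⟩ : ∃ d > 0, ∀ b ∈ K, d ≤ ‖1 - (fourier 1 (x - b) : ℂ)‖ := by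
      refine hK.exists_forall_le' (f := fun b => ‖1 - (fourier 1 (x - b) : ℂ)‖)
        (by fun_prop) (fun b hb => norm_pos_iff.2 (sub_ne_zero.2 fun h => ?_))
      have hxb := (fourier_one_eq_one_iff (Fact.out : 0 < T).ne').1 h.symm
      exact hx (sub_eq_zero.1 hxb ▸ hb)
    have hG_zero : Tendsto (G · x) atTop (𝓝 0) := by
      refine squeeze_zero_norm (fun n => hG_le n x d hd hdist) ?_
      simpa using (tendsto_one_div_add_atTop_nhds_zero_nat (𝕜 := ℝ)).div_const d
    rw [indicator_of_mem (by simpa using hx)]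
    simpa using hG_zero.neg.cexp

theorem integral_fourier_haarAddCircle (n : ℤ) :
    ∫ x : AddCircle T, fourier n x ∂AddCircle.haarAddCircle = if n = 0 then 1 else 0 := by
  have hcoeff : fourierCoeff (fourier n : AddCircle T → ℂ) 0 = if n = 0 then 1 else 0 := by
    rw [fourierCoeff_fourier, Pi.single_apply]
    simp only [eq_comm]
  simpa [fourierCoeff] using hcoeff

theorem cmIntegral_eq_of_mem_discAlgebra (μ : ComplexMeasure (AddCircle T))
    (hμ : ∀ k : ℤ, k < 0 → cmIntegral μ (fun x => (fourier (-k) x : ℂ)) = 0)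
    {f : C(AddCircle T, ℂ)} (hf : f ∈ discAlgebra T) :
    cmIntegral μ f = cmIntegral μ 1 * ∫ x, f x ∂AddCircle.haarAddCircle := by
  have heqOn : EqOn (cmIntegralCLM μ) (cmIntegral μ 1 • integralCLM AddCircle.haarAddCircle)
      (Submonoid.closure {(fourier 1 : C(AddCircle T, ℂ))}) := by
    intro g hg
    obtain ⟨n, rfl⟩ := Submonoid.mem_closure_singleton.1 hg
    rw [fourier_one_pow, _root_.smul_apply, cmIntegralCLM_apply, integralCLM_apply,
      integral_fourier_haarAddCircle, smul_eq_mul]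
    rcases n.eq_zero_or_pos with rfl | hn
    · have hone : ⇑(fourier ((0 : ℕ) : ℤ)) = (1 : AddCircle T → ℂ) := funext fun _ => fourier_zero
      rw [hone, Nat.cast_zero, if_pos rfl, mul_one]
    · have hμn := hμ (-n) (by omega)
      rw [neg_neg] at hμn
      rw [hμn, if_neg (by omega), mul_zero]
  have hmem : f ∈ closure (SetLike.coe (Submodule.span ℂ
      (Submonoid.closure {(fourier 1 : C(AddCircle T, ℂ))} : Set C(AddCircle T, ℂ)))) := by
    rw [← Algebra.adjoin_eq_span]
    exact hf
  simpa [cmIntegralCLM_apply, integralCLM_apply]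
    using ContinuousLinearMap.eqOn_closure_span heqOn hmem

theorem apply_eq_zero_of_isCompact_of_volume_eq_zero (μ : ComplexMeasure (AddCircle T))
    (hμ : ∀ k : ℤ, k < 0 → cmIntegral μ (fun x => (fourier (-k) x : ℂ)) = 0)
    {K : Set (AddCircle T)} (hK : IsCompact K) (h0 : volume K = 0) : μ K = 0 := by
  obtain ⟨F, hF, hF1, hlim⟩ := exists_seq_discAlgebra_tendsto_indicator_compl hK h0
  have h0' : AddCircle.haarAddCircle K = 0 := by
    rw [AddCircle.volume_eq_smul_haarAddCircle] at h0
    simpa [(Fact.out : 0 < T).not_ge] using h0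
  have hhaar : Tendsto (fun n => ∫ x, F n x ∂AddCircle.haarAddCircle) atTop (𝓝 1) := by
    have hlim_ae : ∀ᵐ x ∂AddCircle.haarAddCircle, Tendsto (F · x) atTop (𝓝 1) := by
      filter_upwards [compl_mem_ae_iff.2 h0'] with x hx
      simpa [indicator_of_mem hx] using hlim x
    simpa using tendsto_integral_of_dominated_convergence (fun _ => 1)
      (fun n => (F n).continuous.aestronglyMeasurable) (integrable_const 1)
      (fun n => .of_forall (hF1 n)) hlim_ae
  have hμF : Tendsto (fun n => cmIntegral μ (F n)) atTop (𝓝 (cmIntegral μ 1)) := by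
    simpa only [cmIntegral_eq_of_mem_discAlgebra μ hμ (hF _), mul_one] using hhaar.const_mul _
  have hμK : μ Kᶜ = μ univ := by
    rw [← cmIntegral_indicator_one μ hK.measurableSet.compl,
      ← cmIntegral_indicator_one μ MeasurableSet.univ, indicator_univ]
    exact tendsto_nhds_unique (tendsto_cmIntegral_of_norm_le μ
      (fun n => (F n).continuous.stronglyMeasurable) hF1 hlim) hμF
  have hadd := VectorMeasure.of_add_of_sdiff (v := μ) hK.measurableSet MeasurableSet.univ
    (subset_univ K)
  rwa [← compl_eq_univ_sdiff, hμK, add_eq_right] at hadd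

end DiscAlgebra

theorem fm_riesz_general {T : ℝ} [Fact (0 < T)] (μ : ComplexMeasure (AddCircle T))
    (hμ : ∀ k : ℤ, k < 0 → cmIntegral μ (fun x => (fourier (-k) x : ℂ)) = 0) :
    μ ≪ᵥ (volume : Measure (AddCircle T)).toENNRealVectorMeasure := by
  refine VectorMeasure.AbsolutelyContinuous.mk fun E hE hE0 => ?_
  rw [Measure.toENNRealVectorMeasure_apply_measurable hE] at hE0
  exact complexMeasure_apply_eq_zero_of_forall_isCompact μ hE fun K hKE hK =>
    apply_eq_zero_of_isCompact_of_volume_eq_zero μ hμ hK (measure_mono_null hKE hE0)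

/-- **The F. & M. Riesz theorem.** If `μ` is a finite complex Borel measure on the
circle (modelled as `AddCircle 1`) whose Fourier coefficients `μ̂(k)` vanish for all
`k < 0`, then `μ` is absolutely continuous with respect to arc length measure. -/
theorem fm_riesz (μ : MeasureTheory.ComplexMeasure (AddCircle (1 : ℝ)))
    (hμ : ∀ k : ℤ, k < 0 → cmIntegral μ (fun x => (fourier (-k) x : ℂ)) = 0) :
    μ ≪ᵥ (volume : Measure (AddCircle (1 : ℝ))).toENNRealVectorMeasure :=
  fm_riesz_general μ hμ
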